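/- arXiv:2307.05704 — 3 statements merged into one kernel-verified Lean document; each statement's English description precedes it below -/
import Mathlib

section
/- Let A be an invertible n×n real matrix and let Σ₁, Σ₂, Σ̃₁, Σ̃₂ be diagonal positive-definite n×n real matrices satisfying A Σ₁ Aᵀ = Σ̃₁ and A Σ₂ Aᵀ = Σ̃₂. If the diagonal entries of Σ₂ Σ₁⁻¹ are pairwise distinct, then there exists a permutation σ of {1,…,n} such that A_{ij} = 0 whenever j ≠ σ(i). -/
open Matrix

/-!
Multiplying `A * Sᵣ * B = Tᵣ` on the left by the adjugate of `A` shows that `det A` times column `i`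
of `Sᵣ * B` is a multiple of column `i` of `adjugate A`, for both `r = 1` and `r = 2`. Hence column
`i` of `S₁ * B` and column `i` of `S₂ * B` are proportional, so if column `i` of `B` had nonzero
entries in two rows `j` and `k`, the ratios `S₁ j j : S₂ j j` and `S₁ k k : S₂ k k` would agree. For
`B = Aᵀ` this leaves at most one nonzero entry in each row of `A`, and a nonzero term of the Leibniz
expansion of `det A` supplies the permutation.
-/

section CommRing

variable {ι R : Type*} [Fintype ι] [DecidableEq ι] [CommRing R]
  {A B S T S₁ S₂ T₁ T₂ : Matrix ι ι R}

theorem exists_perm_forall_apply_ne_zero_of_det_ne_zero (hA : A.det ≠ 0) :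
    ∃ σ : Equiv.Perm ι, ∀ i, A (σ i) i ≠ 0 := by
  rw [det_apply'] at hA
  obtain ⟨σ, -, hσ⟩ := Finset.exists_ne_zero_of_sum_ne_zero hA
  exact ⟨σ, fun i hi => hσ (mul_eq_zero_of_right _ (Finset.prod_eq_zero (Finset.mem_univ i) hi))⟩

theorem exists_perm_forall_ne_apply_eq_zero (hA : A.det ≠ 0)
    (hrow : ∀ i j k, A i j ≠ 0 → A i k ≠ 0 → j = k) :
    ∃ σ : Equiv.Perm ι, ∀ i j, j ≠ σ i → A i j = 0 := by
  obtain ⟨σ, hσ⟩ := exists_perm_forall_apply_ne_zero_of_det_ne_zero (A.det_transpose.trans_ne hA)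
  exact ⟨σ, fun i j hj => not_not.mp fun hij => hj (hrow i j (σ i) hij (hσ i))⟩

theorem det_mul_diag_mul_apply_eq_adjugate_mul_diag (hS : S.IsDiag) (hT : T.IsDiag)
    (h : A * S * B = T) (j i : ι) :
    A.det * (S j j * B j i) = A.adjugate j i * T i i := by
  have hadj : A.det • (S * B) = A.adjugate * T := by
    rw [← h, Matrix.mul_assoc A, ← Matrix.mul_assoc, adjugate_mul, smul_mul, Matrix.one_mul]
  calc A.det * (S j j * B j i) = (A.det • (S * B)) j i := by
        rw [Matrix.smul_apply, smul_eq_mul, ← hS.diagonal_diag, diagonal_mul, diagonal_apply_eq]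
    _ = (A.adjugate * T) j i := congr_fun₂ hadj j i
    _ = A.adjugate j i * T i i := by
        rw [← hT.diagonal_diag, mul_diagonal, diagonal_apply_eq]

theorem eq_of_apply_ne_zero_of_mul_mul_isDiag [NoZeroDivisors R] (hA : A.det ≠ 0)
    (hS₁ : S₁.IsDiag) (hS₂ : S₂.IsDiag) (hT₁ : T₁.IsDiag) (hT₂ : T₂.IsDiag)
    (h₁ : A * S₁ * B = T₁) (h₂ : A * S₂ * B = T₂)
    (hdist : Pairwise fun i j => S₁ i i * S₂ j j ≠ S₁ j j * S₂ i i)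
    {i j k : ι} (hj : B j i ≠ 0) (hk : B k i ≠ 0) : j = k := by
  have hcol₁ := det_mul_diag_mul_apply_eq_adjugate_mul_diag hS₁ hT₁ h₁
  have hcol₂ := det_mul_diag_mul_apply_eq_adjugate_mul_diag hS₂ hT₂ h₂
  have hprop : (A.det * (S₁ j j * B j i)) * (A.det * (S₂ k k * B k i)) =
      (A.det * (S₁ k k * B k i)) * (A.det * (S₂ j j * B j i)) := by
    rw [hcol₁, hcol₂, hcol₁, hcol₂]
    ring
  have hcoeff : A.det ^ 2 * B j i * B k i ≠ 0 :=
    mul_ne_zero (mul_ne_zero (pow_ne_zero 2 hA) hj) hk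
  have hratio : (A.det ^ 2 * B j i * B k i) * (S₁ j j * S₂ k k - S₁ k k * S₂ j j) = 0 := by
    linear_combination hprop
  by_contra hjk
  exact hdist hjk (sub_eq_zero.mp ((mul_eq_zero.mp hratio).resolve_left hcoeff))

theorem affine_cov_transport_perm_general [NoZeroDivisors R] (hA : A.det ≠ 0)
    (hS₁ : S₁.IsDiag) (hS₂ : S₂.IsDiag) (hT₁ : T₁.IsDiag) (hT₂ : T₂.IsDiag)
    (h₁ : A * S₁ * Aᵀ = T₁) (h₂ : A * S₂ * Aᵀ = T₂)
    (hdist : Pairwise fun i j => S₁ i i * S₂ j j ≠ S₁ j j * S₂ i i) :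
    ∃ σ : Equiv.Perm ι, ∀ i j, j ≠ σ i → A i j = 0 :=
  exists_perm_forall_ne_apply_eq_zero hA fun _ _ _ =>
    eq_of_apply_ne_zero_of_mul_mul_isDiag hA hS₁ hS₂ hT₁ hT₂ h₁ h₂ hdist

end CommRing

section Field

variable {ι K : Type*} [Fintype ι] [DecidableEq ι] [Field K] {S : Matrix ι ι K}

theorem mul_inv_apply_of_isDiag (hS : S.IsDiag) (hS₀ : ∀ i, S i i ≠ 0) (M : Matrix ι ι K)
    (i j : ι) : (M * S⁻¹) i j = M i j / S j j := by
  have hdet : IsUnit S.det := by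
    rw [← hS.diagonal_diag, det_diagonal, isUnit_iff_ne_zero]
    exact Finset.prod_ne_zero_iff.mpr fun i _ => hS₀ i
  calc (M * S⁻¹) i j = (M * S⁻¹ * diagonal S.diag) i j / S j j := by
        rw [mul_diagonal, diag_apply, mul_div_cancel_right₀ _ (hS₀ j)]
    _ = M i j / S j j := by rw [hS.diagonal_diag, nonsing_inv_mul_cancel_right S M hdet]

theorem pairwise_mul_ne_mul_of_pairwise_mul_inv_ne {M : Matrix ι ι K} (hS : S.IsDiag)
    (hS₀ : ∀ i, S i i ≠ 0) (hdist : Pairwise fun i j => (M * S⁻¹) i i ≠ (M * S⁻¹) j j) :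
    Pairwise fun i j => S i i * M j j ≠ S j j * M i i := by
  intro i j hij heq
  refine hdist hij ?_
  rw [mul_inv_apply_of_isDiag hS hS₀, mul_inv_apply_of_isDiag hS hS₀,
    div_eq_div_iff (hS₀ i) (hS₀ j)]
  linear_combination -heq

end Field

/-- If an invertible matrix `A` maps two diagonal positive-definite covariances `S₁, S₂`
onto diagonal positive-definite covariances `T₁, T₂` (via `A Sᵢ Aᵀ = Tᵢ`), and the diagonal
entries of `S₂ S₁⁻¹` are pairwise distinct, then `A` is supported on the graph of a
permutation. -/
theorem affine_cov_transport_perm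
    (n : ℕ) (hn : 1 ≤ n) (A S₁ S₂ T₁ T₂ : Matrix (Fin n) (Fin n) ℝ)
    (hA : IsUnit A)
    (hS₁d : S₁.IsDiag) (hS₁pos : ∀ i, 0 < S₁ i i)
    (hS₂d : S₂.IsDiag) (hS₂pos : ∀ i, 0 < S₂ i i)
    (hT₁d : T₁.IsDiag) (hT₁pos : ∀ i, 0 < T₁ i i)
    (hT₂d : T₂.IsDiag) (hT₂pos : ∀ i, 0 < T₂ i i)
    (h₁ : A * S₁ * Aᵀ = T₁) (h₂ : A * S₂ * Aᵀ = T₂)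
    (hdist : ∀ i j : Fin n, i ≠ j → (S₂ * S₁⁻¹) i i ≠ (S₂ * S₁⁻¹) j j) :
    ∃ σ : Equiv.Perm (Fin n), ∀ i j : Fin n, j ≠ σ i → A i j = 0 :=
  affine_cov_transport_perm_general (A.isUnit_iff_isUnit_det.mp hA).ne_zero hS₁d hS₂d hT₁d hT₂d
    h₁ h₂ (pairwise_mul_ne_mul_of_pairwise_mul_inv_ne hS₁d (fun i => (hS₁pos i).ne') hdist)
end

section
/- Let A be an invertible n×n real matrix and let Σ₁, Σ₂, Σ̃₁, Σ̃₂ be diagonal positive-definite n×n real matrices satisfying A Σ₁ Aᵀ = Σ̃₁ and A Σ₂ Aᵀ = Σ̃₂. If Σ̃₂ Σ̃₁⁻¹ = Σ₂ Σ₁⁻¹ and the diagonal entries of Σ₂ Σ₁⁻¹ are pairwise distinct, then A is diagonal. -/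
open Matrix

/-!
The ratio `D = S₂ * S₁⁻¹` satisfies `S₂ = D * S₁`, and equality of the two ratios gives
`T₂ = D * T₁`. Hence `A * D * (S₁ * Aᵀ) = T₂ = D * A * (S₁ * Aᵀ)`, and cancelling `S₁ * Aᵀ` shows
that `A` commutes with `D`. Entrywise, `A i j * D j j = D i i * A i j`, which forces `A i j = 0`
whenever `D i i ≠ D j j`.
-/

section General

variable {ι R : Type*} [Fintype ι]

theorem isDiag_of_commute_of_isDiag [CommSemiring R] [IsCancelMulZero R] {A D : Matrix ι ι R}
    (hAD : Commute A D) (hD : D.IsDiag) (hinj : Function.Injective D.diag) : A.IsDiag := by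
  classical
  intro i j hij
  have hentry : A i j * D j j = A i j * D i i := by
    have hcomm : (A * D) i j = (D * A) i j := congr_fun₂ hAD.eq i j
    rwa [← hD.diagonal_diag, mul_diagonal, diagonal_mul, mul_comm (D.diag i)] at hcomm
  by_contra hAij
  exact hij (hinj (mul_left_cancel₀ hAij hentry).symm)

theorem isDiag_mul [NonUnitalNonAssocSemiring R] {A B : Matrix ι ι R}
    (hA : A.IsDiag) (hB : B.IsDiag) : (A * B).IsDiag := by
  classical
  rw [← hA.diagonal_diag, ← hB.diagonal_diag, diagonal_mul_diagonal]
  exact isDiag_diagonal _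

variable [DecidableEq ι] [CommRing R]

theorem isDiag_inv {A : Matrix ι ι R} (hA : A.IsDiag) : A⁻¹.IsDiag := by
  rw [← hA.diagonal_diag, inv_diagonal]
  exact isDiag_diagonal _

theorem isUnit_iff_of_isDiag {A : Matrix ι ι R} (hA : A.IsDiag) :
    IsUnit A ↔ ∀ i, IsUnit (A i i) := by
  conv_lhs => rw [← hA.diagonal_diag]
  exact isUnit_diagonal.trans Pi.isUnit_iff

theorem commute_mul_inv_of_mul_inv_eq {A B S₁ S₂ T₁ T₂ : Matrix ι ι R}
    (hA : IsUnit A) (hB : IsUnit B) (hS₁ : IsUnit S₁)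
    (h₁ : A * S₁ * B = T₁) (h₂ : A * S₂ * B = T₂) (hratio : T₂ * T₁⁻¹ = S₂ * S₁⁻¹) :
    Commute A (S₂ * S₁⁻¹) := by
  have hT₁ : IsUnit T₁ := h₁ ▸ (hA.mul hS₁).mul hB
  have hS : S₂ * S₁⁻¹ * S₁ = S₂ :=
    nonsing_inv_mul_cancel_right _ _ ((isUnit_iff_isUnit_det _).1 hS₁)
  have hT : S₂ * S₁⁻¹ * T₁ = T₂ := by
    rw [← hratio, nonsing_inv_mul_cancel_right _ _ ((isUnit_iff_isUnit_det _).1 hT₁)]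
  apply (hS₁.mul hB).mul_right_cancel
  calc A * (S₂ * S₁⁻¹) * (S₁ * B)
      = A * (S₂ * S₁⁻¹ * S₁) * B := by simp only [Matrix.mul_assoc]
    _ = S₂ * S₁⁻¹ * (A * S₁ * B) := by rw [hS, h₂, h₁, hT]
    _ = S₂ * S₁⁻¹ * A * (S₁ * B) := by simp only [Matrix.mul_assoc]

/-- `B` stands for `Aᵀ`, or for `Aᴴ` in the case of complex covariances. -/
theorem affine_cov_transport_diag_general [IsCancelMulZero R] {A B S₁ S₂ T₁ T₂ : Matrix ι ι R}
    (hA : IsUnit A) (hB : IsUnit B) (hS₁ : IsUnit S₁)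
    (h₁ : A * S₁ * B = T₁) (h₂ : A * S₂ * B = T₂) (hratio : T₂ * T₁⁻¹ = S₂ * S₁⁻¹)
    (hdiag : (S₂ * S₁⁻¹).IsDiag) (hdist : Function.Injective (S₂ * S₁⁻¹).diag) : A.IsDiag :=
  isDiag_of_commute_of_isDiag (commute_mul_inv_of_mul_inv_eq hA hB hS₁ h₁ h₂ hratio) hdiag hdist

end General

/-- If an invertible matrix `A` maps two diagonal positive-definite covariances `S₁, S₂`
onto diagonal positive-definite covariances `T₁, T₂` (via `A Sᵢ Aᵀ = Tᵢ`), the covariance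
ratios agree (`T₂ T₁⁻¹ = S₂ S₁⁻¹`), and the diagonal entries of `S₂ S₁⁻¹` are pairwise
distinct, then `A` is diagonal. -/
theorem affine_cov_transport_diag
    (n : ℕ) (hn : 1 ≤ n) (A S₁ S₂ T₁ T₂ : Matrix (Fin n) (Fin n) ℝ)
    (hA : IsUnit A)
    (hS₁d : S₁.IsDiag) (hS₁pos : ∀ i, 0 < S₁ i i)
    (hS₂d : S₂.IsDiag) (hS₂pos : ∀ i, 0 < S₂ i i)
    (hT₁d : T₁.IsDiag) (hT₁pos : ∀ i, 0 < T₁ i i)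
    (hT₂d : T₂.IsDiag) (hT₂pos : ∀ i, 0 < T₂ i i)
    (h₁ : A * S₁ * Aᵀ = T₁) (h₂ : A * S₂ * Aᵀ = T₂)
    (hratio : T₂ * T₁⁻¹ = S₂ * S₁⁻¹)
    (hdist : ∀ i j : Fin n, i ≠ j → (S₂ * S₁⁻¹) i i ≠ (S₂ * S₁⁻¹) j j) :
    A.IsDiag := by
  have hS₁ : IsUnit S₁ := (isUnit_iff_of_isDiag hS₁d).2 fun i => (hS₁pos i).ne'.isUnit
  exact affine_cov_transport_diag_general hA ((isUnit_transpose A).2 hA) hS₁ h₁ h₂ hratio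
    (isDiag_mul hS₂d (isDiag_inv hS₁d)) fun i j => not_imp_not.1 (hdist i j)
end

section
/- Let Z₁ and ε be independent real random variables each with the standard Gaussian distribution N(0,1), and let f : ℝ → ℝ be twice continuously differentiable with f' and f'' bounded. Define H₁ := −1 − f'(Z₁)² + f''(Z₁)·ε. Then Var(H₁) = Var(f'(Z₁)²) + E[f''(Z₁)²]. Moreover, if f'' is not identically zero (i.e. f is not affine), then Var(H₁) > 0, while the leaf diagonal Hessian entry H₂ := −1 is constant and has Var(H₂) = 0. -/
open MeasureTheory ProbabilityTheory

/-!
The noise `ε` is centered and independent of `(f'(Z₁), f''(Z₁))`, so the term `f''(Z₁) * ε` is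
centered and uncorrelated with `f'(Z₁) ^ 2`: the variances of the two summands of `H₁` add up, and
the second one factors as `E[f''(Z₁) ^ 2] * Var(ε)`. If `f''` is nonzero somewhere, by continuity
it is nonzero on an open set, which is charged by any law of full support.
-/

section Independence

variable {Ω : Type*} {mΩ : MeasurableSpace Ω} {μ : Measure Ω}

theorem memLp_fun_mul_of_indepFun {𝕜 : Type*} [NormedRing 𝕜] [NormMulClass 𝕜] [MeasurableSpace 𝕜]
    [OpensMeasurableSpace 𝕜] {p : ENNReal} {X Y : Ω → 𝕜} (hXY : IndepFun X Y μ)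
    (hX : MemLp X p μ) (hY : MemLp Y p μ) : MemLp (fun ω ↦ X ω * Y ω) p μ := by
  rcases eq_or_ne p 0 with rfl | hp₀
  · exact memLp_zero_iff_aestronglyMeasurable.2 (hX.1.mul hY.1)
  rcases eq_or_ne p ⊤ with rfl | hp
  · exact hY.mul' hX
  have hindep : IndepFun (fun ω ↦ ‖X ω‖ ^ p.toReal) (fun ω ↦ ‖Y ω‖ ^ p.toReal) μ :=
    hXY.comp (measurable_norm.pow_const p.toReal) (measurable_norm.pow_const p.toReal)
  rw [← integrable_norm_rpow_iff (hX.1.fun_mul hY.1) hp₀ hp]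
  simp only [norm_mul, Real.mul_rpow (norm_nonneg _) (norm_nonneg _)]
  exact hindep.integrable_mul (hX.integrable_norm_rpow hp₀ hp) (hY.integrable_norm_rpow hp₀ hp)

theorem integral_fun_mul_eq_zero_of_indepFun {𝕜 : Type*} [RCLike 𝕜] {X Y : Ω → 𝕜}
    (hXY : IndepFun X Y μ) (hX : AEStronglyMeasurable X μ) (hY : AEStronglyMeasurable Y μ)
    (hY₀ : μ[Y] = 0) : ∫ ω, X ω * Y ω ∂μ = 0 := by
  rw [hXY.integral_fun_mul_eq_mul_integral hX hY, hY₀, mul_zero]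

variable {A B X : Ω → ℝ}

theorem variance_fun_mul_of_indepFun (hBX : IndepFun B X μ) (hB : AEStronglyMeasurable B μ)
    (hX : AEStronglyMeasurable X μ) (hX₀ : μ[X] = 0) :
    variance (fun ω ↦ B ω * X ω) μ = (∫ ω, B ω ^ 2 ∂μ) * variance X μ := by
  have hsq : IndepFun (fun ω ↦ B ω ^ 2) (fun ω ↦ X ω ^ 2) μ :=
    hBX.comp (measurable_id.pow_const 2) (measurable_id.pow_const 2)
  rw [variance_of_integral_eq_zero (hB.fun_mul hX).aemeasurable
      (integral_fun_mul_eq_zero_of_indepFun hBX hB hX hX₀),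
    variance_of_integral_eq_zero hX.aemeasurable hX₀]
  simpa only [mul_pow] using hsq.integral_fun_mul_eq_mul_integral (hB.pow 2) (hX.pow 2)

variable [IsProbabilityMeasure μ]

theorem covariance_fun_mul_eq_zero_of_indepFun (hABX : IndepFun (fun ω ↦ (A ω, B ω)) X μ)
    (hA : MemLp A 2 μ) (hB : MemLp B 2 μ) (hX : MemLp X 2 μ) (hX₀ : μ[X] = 0) :
    covariance A (fun ω ↦ B ω * X ω) μ = 0 := by
  have hBX : IndepFun B X μ := hABX.comp measurable_snd measurable_id
  have hAB_X : IndepFun (fun ω ↦ A ω * B ω) X μ := hABX.comp measurable_mul measurable_id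
  have hmean_mul : ∫ ω, A ω * (B ω * X ω) ∂μ = 0 := by
    simpa only [mul_assoc] using
      integral_fun_mul_eq_zero_of_indepFun hAB_X (hA.1.fun_mul hB.1) hX.1 hX₀
  rw [covariance_eq_sub hA (memLp_fun_mul_of_indepFun hBX hB hX),
    integral_fun_mul_eq_zero_of_indepFun hBX hB.1 hX.1 hX₀, mul_zero, sub_zero]
  exact hmean_mul

theorem variance_fun_add_mul_of_indepFun (hABX : IndepFun (fun ω ↦ (A ω, B ω)) X μ)
    (hA : MemLp A 2 μ) (hB : MemLp B 2 μ) (hX : MemLp X 2 μ) (hX₀ : μ[X] = 0) :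
    variance (fun ω ↦ A ω + B ω * X ω) μ
      = variance A μ + (∫ ω, B ω ^ 2 ∂μ) * variance X μ := by
  have hBX : IndepFun B X μ := hABX.comp measurable_snd measurable_id
  rw [variance_fun_add hA (memLp_fun_mul_of_indepFun hBX hB hX),
    covariance_fun_mul_eq_zero_of_indepFun hABX hA hB hX hX₀,
    variance_fun_mul_of_indepFun hBX hB.1 hX.1 hX₀, mul_zero, add_zero]

end Independence

theorem integral_sq_comp_pos {Ω E : Type*} {mΩ : MeasurableSpace Ω} {μ : Measure Ω}
    [TopologicalSpace E] [MeasurableSpace E] [OpensMeasurableSpace E] {Z : Ω → E}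
    (hZ : AEMeasurable Z μ) [(μ.map Z).IsOpenPosMeasure] {h : E → ℝ} (hh : Continuous h)
    (hhZ : MemLp (fun ω ↦ h (Z ω)) 2 μ) (hne : h ≠ 0) : 0 < ∫ ω, h (Z ω) ^ 2 ∂μ := by
  obtain ⟨x, hx⟩ := Function.ne_iff.1 hne
  have hsq : AEStronglyMeasurable (fun z ↦ h z ^ 2) (μ.map Z) :=
    (hh.pow 2).measurable.aestronglyMeasurable
  have hint : Integrable (fun z ↦ h z ^ 2) (μ.map Z) :=
    (integrable_map_measure hsq hZ).2 hhZ.integrable_sq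
  rw [← integral_map hZ hsq]
  exact integral_pos_of_integrable_nonneg_nonzero (hh.pow 2) hint (fun z ↦ sq_nonneg (h z))
    (pow_ne_zero 2 hx)

theorem isOpenPosMeasure_gaussianReal (m : ℝ) {v : NNReal} (hv : v ≠ 0) :
    (gaussianReal m v).IsOpenPosMeasure :=
  (gaussianReal_absolutelyContinuous' m hv).isOpenPosMeasure

theorem anm_hessian_variance_asymmetry_general
    {Ω : Type*} [MeasurableSpace Ω] (μ : Measure Ω) [IsProbabilityMeasure μ]
    (Z₁ ε : Ω → ℝ) (hZ₁ : AEMeasurable Z₁ μ) (hindep : IndepFun Z₁ ε μ)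
    [(μ.map Z₁).IsOpenPosMeasure] (hε : MemLp ε 2 μ) (hε₀ : μ[ε] = 0)
    (f : ℝ → ℝ) (hf : ContDiff ℝ 2 f)
    (hf'_sq : MemLp (fun ω ↦ deriv f (Z₁ ω) ^ 2) 2 μ)
    (hf'' : MemLp (fun ω ↦ deriv (deriv f) (Z₁ ω)) 2 μ) :
    variance (fun ω ↦ -1 - deriv f (Z₁ ω) ^ 2 + deriv (deriv f) (Z₁ ω) * ε ω) μ
        = variance (fun ω ↦ deriv f (Z₁ ω) ^ 2) μ
          + (∫ ω, deriv (deriv f) (Z₁ ω) ^ 2 ∂μ) * variance ε μ ∧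
    (deriv (deriv f) ≠ 0 → variance ε μ ≠ 0 →
      0 < variance (fun ω ↦ -1 - deriv f (Z₁ ω) ^ 2 + deriv (deriv f) (Z₁ ω) * ε ω) μ) ∧
    variance (fun _ : Ω ↦ (-1 : ℝ)) μ = 0 := by
  have hcont : Continuous (deriv (deriv f)) := (hf.iterate_deriv' 0 2).continuous
  have hpair : IndepFun (fun ω ↦ (-1 - deriv f (Z₁ ω) ^ 2, deriv (deriv f) (Z₁ ω))) ε μ :=
    hindep.comp (φ := fun z ↦ (-1 - deriv f z ^ 2, deriv (deriv f) z)) (by fun_prop) measurable_id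
  have hvar : variance (fun ω ↦ -1 - deriv f (Z₁ ω) ^ 2 + deriv (deriv f) (Z₁ ω) * ε ω) μ
      = variance (fun ω ↦ deriv f (Z₁ ω) ^ 2) μ
        + (∫ ω, deriv (deriv f) (Z₁ ω) ^ 2 ∂μ) * variance ε μ := by
    rw [variance_fun_add_mul_of_indepFun hpair ((memLp_const (-1)).sub hf'_sq) hf'' hε hε₀,
      variance_const_sub hf'_sq.1]
  refine ⟨hvar, fun hne hεvar ↦ ?_, by simp [← covariance_self aemeasurable_const]⟩
  rw [hvar]
  exact add_pos_of_nonneg_of_pos (variance_nonneg _ _) <|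
    mul_pos (integral_sq_comp_pos hZ₁ hcont hf'' hne) ((variance_nonneg ε μ).lt_of_ne' hεvar)

/-- Variance asymmetry between the root and leaf diagonal Hessian entries of the
bivariate Gaussian ANM. With `Z₁, ε` independent standard Gaussians and
`H₁ = −1 − f'(Z₁)² + f''(Z₁)·ε`, we have `Var(H₁) = Var(f'(Z₁)²) + E[f''(Z₁)²]`;
if `f''` is not identically zero then `Var(H₁) > 0`, while the constant leaf entry
`H₂ = −1` has variance `0`. -/
theorem anm_hessian_variance_asymmetry
    {Ω : Type*} [MeasurableSpace Ω] (μ : Measure Ω) [IsProbabilityMeasure μ]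
    (Z₁ ε : Ω → ℝ) (hZ₁ : Measurable Z₁) (hε : Measurable ε)
    (hindep : IndepFun Z₁ ε μ)
    (hZ₁law : μ.map Z₁ = gaussianReal 0 1) (hεlaw : μ.map ε = gaussianReal 0 1)
    (f : ℝ → ℝ) (hf : ContDiff ℝ 2 f)
    (C : ℝ) (hf'bdd : ∀ x, |deriv f x| ≤ C) (hf''bdd : ∀ x, |deriv (deriv f) x| ≤ C) :
    variance (fun ω => -1 - (deriv f (Z₁ ω)) ^ 2 + deriv (deriv f) (Z₁ ω) * ε ω) μ
        = variance (fun ω => (deriv f (Z₁ ω)) ^ 2) μ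
          + ∫ ω, (deriv (deriv f) (Z₁ ω)) ^ 2 ∂μ ∧
    (deriv (deriv f) ≠ 0 →
      0 < variance (fun ω => -1 - (deriv f (Z₁ ω)) ^ 2 + deriv (deriv f) (Z₁ ω) * ε ω) μ) ∧
    variance (fun _ : Ω => (-1 : ℝ)) μ = 0 := by
  have hε_hasLaw : HasLaw ε (gaussianReal 0 1) μ := ⟨hε.aemeasurable, hεlaw⟩
  have hε₀ : μ[ε] = 0 := hε_hasLaw.integral_eq.trans integral_id_gaussianReal
  have hεvar : variance ε μ = 1 := by
    rw [hε_hasLaw.variance_eq, variance_id_gaussianReal, NNReal.coe_one]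
  have : (μ.map Z₁).IsOpenPosMeasure := hZ₁law ▸ isOpenPosMeasure_gaussianReal 0 one_ne_zero
  have hf'_sq_bdd (x : ℝ) : ‖deriv f x ^ 2‖ ≤ C ^ 2 := by
    simpa only [norm_pow] using pow_le_pow_left₀ (norm_nonneg _) (hf'bdd x) 2
  have hf'_sq : MemLp (fun ω ↦ deriv f (Z₁ ω) ^ 2) 2 μ :=
    .of_bound (((measurable_deriv f).comp hZ₁).pow_const 2).aestronglyMeasurable (C ^ 2)
      (.of_forall fun ω ↦ hf'_sq_bdd (Z₁ ω))
  have hf'' : MemLp (fun ω ↦ deriv (deriv f) (Z₁ ω)) 2 μ :=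
    .of_bound ((measurable_deriv _).comp hZ₁).aestronglyMeasurable C
      (.of_forall fun ω ↦ hf''bdd (Z₁ ω))
  simpa [hεvar] using anm_hessian_variance_asymmetry_general μ Z₁ ε hZ₁.aemeasurable hindep
    hε_hasLaw.hasGaussianLaw.memLp_two hε₀ f hf hf'_sq hf''
end
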